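/- Define the implementation shortfall IS(x) = (1/x)·∫₀ˣ g(y) dy for x ≠ 0. Then IS(x) = N·∫₀¹ F(x·y)·y^{N−1} dy for every x ≠ 0. If moreover h is not constant, then IS(x) < F(x) for every x > 0 and IS(x) > F(x) for every x < 0. -/

import Mathlib

open MeasureTheory Filter Set

/-- Centered Gaussian density with variance `σ²`. -/
noncomputable def gq (σ z : ℝ) : ℝ :=
  Real.exp (-(z ^ 2) / (2 * σ ^ 2)) / (σ * Real.sqrt (2 * Real.pi))

/-- The averaged kernel `q̄(σ,x,z)`. -/
noncomputable def gqbar (σ x z : ℝ) : ℝ :=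
  if x = 0 then gq σ z else (1 / x) * ∫ y in (0:ℝ)..x, gq σ (y - z)

/-- `Φ⁺(y) = E[V·1_{V>y}]`. -/
noncomputable def Phip {Ω : Type*} [MeasurableSpace Ω] (P : Measure Ω) (V : Ω → ℝ) (y : ℝ) : ℝ :=
  ∫ ω in {ω | V ω > y}, V ω ∂P

/-- `Π⁺(y) = P(V > y)`. -/
noncomputable def Pip {Ω : Type*} [MeasurableSpace Ω] (P : Measure Ω) (V : Ω → ℝ) (y : ℝ) : ℝ :=
  (P {ω | V ω > y}).toReal

/-- `Φ⁻(y) = E[V·1_{V≤y}]`. -/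
noncomputable def Phim {Ω : Type*} [MeasurableSpace Ω] (P : Measure Ω) (V : Ω → ℝ) (y : ℝ) : ℝ :=
  ∫ ω in {ω | V ω ≤ y}, V ω ∂P

/-- `Π⁻(y) = P(V ≤ y)`. -/
noncomputable def Pim {Ω : Type*} [MeasurableSpace Ω] (P : Measure Ω) (V : Ω → ℝ) (y : ℝ) : ℝ :=
  (P {ω | V ω ≤ y}).toReal

/-- `Ψ⁺ = Φ⁺/Π⁺`. -/
noncomputable def Psip {Ω : Type*} [MeasurableSpace Ω] (P : Measure Ω) (V : Ω → ℝ) (y : ℝ) : ℝ :=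
  Phip P V y / Pip P V y

/-- `Ψ⁻ = Φ⁻/Π⁻`. -/
noncomputable def Psim {Ω : Type*} [MeasurableSpace Ω] (P : Measure Ω) (V : Ω → ℝ) (y : ℝ) : ℝ :=
  Phim P V y / Pim P V y

/-- `φ⁺_g`. -/
noncomputable def phip {Ω : Type*} [MeasurableSpace Ω] (P : Measure Ω) (V : Ω → ℝ)
    (σ : ℝ) (g : ℝ → ℝ) (x : ℝ) : ℝ :=
  (∫ z, Phip P V (g z) * gq σ (x - z)) / (∫ z, Pip P V (g z) * gq σ (x - z))

/-- `φ⁻_g`. -/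
noncomputable def phim {Ω : Type*} [MeasurableSpace Ω] (P : Measure Ω) (V : Ω → ℝ)
    (σ : ℝ) (g : ℝ → ℝ) (x : ℝ) : ℝ :=
  (∫ z, Phim P V (g z) * gq σ (x - z)) / (∫ z, Pim P V (g z) * gq σ (x - z))

/-- `φ_g`, equal to `φ⁺_g` on `[0,∞)` and `φ⁻_g` on `(−∞,0)`. -/
noncomputable def phig {Ω : Type*} [MeasurableSpace Ω] (P : Measure Ω) (V : Ω → ℝ)
    (σ : ℝ) (g : ℝ → ℝ) (x : ℝ) : ℝ :=
  if 0 ≤ x then phip P V σ g x else phim P V σ g x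

/-- The interior of the support of the law of `V` is `(m, M)` (with `V` bounded). -/
def SuppIoo {Ω : Type*} [MeasurableSpace Ω] (P : Measure Ω) (V : Ω → ℝ) (m M : ℝ) : Prop :=
  m < M ∧ (∀ᵐ ω ∂P, V ω ∈ Set.Icc m M) ∧
    (∀ y < M, 0 < P {ω | V ω > y}) ∧ (∀ y, m < y → 0 < P {ω | V ω ≤ y})

/-- Equation (E). -/
def SolvesE {Ω : Type*} [MeasurableSpace Ω] (P : Measure Ω) (V : Ω → ℝ)
    (σ : ℝ) (N : ℕ) (F : ℝ → ℝ) : Prop :=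
  ∀ x : ℝ, F x =
    ∫ z, ((1 / (N:ℝ)) * gq σ (x - z) + (((N:ℝ) - 1) / (N:ℝ)) * gqbar σ x z) * phig P V σ F z

/-! Let `A x` be the mean of `g` over the segment from `0` to `x`, so that `x * A x = ∫₀ˣ g`. Then
`IS = A` away from `0`, and `F = A + (g - A) / N`. Differentiating, `x * A' = g - A`, hence
`d/dy (y ^ N * A (x * y)) = N * y ^ (N - 1) * F (x * y)`, and integrating over `[0, 1]` gives the
first claim. For the second, `F - IS = (g - A) / N`, whose sign is that of `x` because `g`, a
nonconstant monotone function smoothed by the Gaussian, an atomless measure charging every open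
set, is continuous and strictly increasing. -/

section RunningMean

variable {E : Type*} [NormedAddCommGroup E] [NormedSpace ℝ E] {f : ℝ → E}

/-- The mean of `f` over the segment from `0` to `x`, that is, the implementation shortfall of the
price function `f`. It is written as an integral over `[0, 1]` so that no division by `x` occurs
and the value at `x = 0` is `f 0`. -/
noncomputable def runningMean (f : ℝ → E) (x : ℝ) : E :=
  ∫ t in (0:ℝ)..1, f (x * t)

theorem runningMean_zero [CompleteSpace E] (f : ℝ → E) : runningMean f 0 = f 0 := by
  simp [runningMean]

theorem smul_runningMean (f : ℝ → E) (x : ℝ) :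
    x • runningMean f x = ∫ t in (0:ℝ)..x, f t := by
  simp [runningMean]

theorem runningMean_comp_mul_left (f : ℝ → E) (x t : ℝ) :
    runningMean (fun s ↦ f (x * s)) t = runningMean f (x * t) := by
  simp only [runningMean, mul_assoc]

theorem continuous_runningMean (hf : Continuous f) : Continuous (runningMean f) :=
  intervalIntegral.continuous_parametric_intervalIntegral_of_continuous' (by fun_prop) 0 1

variable [CompleteSpace E]

theorem hasDerivAt_smul_runningMean (hf : Continuous f) (x : ℝ) :
    HasDerivAt (fun x ↦ x • runningMean f x) (f x) x := by
  simpa only [smul_runningMean] using hf.integral_hasStrictDerivAt 0 x |>.hasDerivAt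

theorem hasDerivAt_rpow_smul_runningMean (hf : Continuous f) (p : ℝ) {t : ℝ} (ht : 0 < t) :
    HasDerivAt (fun t ↦ t ^ p • runningMean f t)
      (t ^ (p - 1) • ((p - 1) • runningMean f t + f t)) t := by
  have hpred (q : ℝ) {s : ℝ} (hs : 0 < s) : s ^ (q - 1) * s = s ^ q := by
    rw [Real.rpow_sub_one hs.ne', div_mul_cancel₀ _ hs.ne']
  have hfactor : (fun s ↦ s ^ p • runningMean f s) =ᶠ[nhds t]
      fun s ↦ s ^ (p - 1) • s • runningMean f s := by
    filter_upwards [lt_mem_nhds ht] with s hs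
    rw [smul_smul, hpred p hs]
  have hpow : HasDerivAt (fun s : ℝ ↦ s ^ (p - 1)) ((p - 1) * t ^ (p - 1 - 1)) t :=
    Real.hasDerivAt_rpow_const (.inl ht.ne')
  have hprod := hpow.smul (hasDerivAt_smul_runningMean hf t)
  refine (hprod.congr_deriv ?_).congr_of_eventuallyEq hfactor
  rw [smul_smul, mul_assoc, hpred (p - 1) ht, smul_add, smul_smul, mul_comm (p - 1), add_comm]

theorem integral_rpow_smul_runningMean {p : ℝ} (hp : 0 < p) (hf : Continuous f) :
    ∫ t in (0:ℝ)..1, t ^ (p - 1) • ((p - 1) • runningMean f t + f t) = runningMean f 1 := by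
  have hmean := continuous_runningMean hf
  have hpow : Continuous fun t : ℝ ↦ t ^ p := Real.continuous_rpow_const hp.le
  have hint : IntervalIntegrable
      (fun t ↦ t ^ (p - 1) • ((p - 1) • runningMean f t + f t)) volume 0 1 :=
    (intervalIntegral.intervalIntegrable_rpow' (by linarith)).smul_continuousOn (by fun_prop)
  rw [intervalIntegral.integral_eq_sub_of_hasDerivAt_of_le zero_le_one
    (hpow.smul hmean).continuousOn (fun t ht ↦ hasDerivAt_rpow_smul_runningMean hf p ht.1) hint]
  simp [hp.ne']

theorem integral_rpow_smul_runningMean_mul {p : ℝ} (hp : 0 < p) (hf : Continuous f) (x : ℝ) :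
    ∫ t in (0:ℝ)..1, t ^ (p - 1) • ((p - 1) • runningMean f (x * t) + f (x * t)) =
      runningMean f x := by
  simpa only [runningMean_comp_mul_left, mul_one] using
    integral_rpow_smul_runningMean hp (f := fun s ↦ f (x * s)) (by fun_prop)

end RunningMean

section

variable {f : ℝ → ℝ} {x : ℝ}

theorem runningMean_lt_of_pos (hf : Continuous f) (hmono : StrictMono f) (hx : 0 < x) :
    runningMean f x < f x := by
  suffices runningMean f x < ∫ _ in (0:ℝ)..1, f x by simpa using this
  refine intervalIntegral.integral_lt_integral_of_continuousOn_of_le_of_exists_lt zero_lt_one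
    (by fun_prop) continuousOn_const (fun t ht ↦ hmono.monotone ?_)
    ⟨0, left_mem_Icc.2 zero_le_one, hmono (by simpa using hx)⟩
  exact mul_le_of_le_one_right hx.le ht.2

theorem lt_runningMean_of_neg (hf : Continuous f) (hmono : StrictMono f) (hx : x < 0) :
    f x < runningMean f x := by
  suffices ∫ _ in (0:ℝ)..1, f x < runningMean f x by simpa using this
  refine intervalIntegral.integral_lt_integral_of_continuousOn_of_le_of_exists_lt zero_lt_one
    continuousOn_const (by fun_prop) (fun t ht ↦ hmono.monotone ?_)
    ⟨0, left_mem_Icc.2 zero_le_one, hmono (by simpa using hx)⟩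
  exact le_mul_of_le_one_right hx.le ht.2

end

section Smoothing

variable {μ : Measure ℝ} {h : ℝ → ℝ}

theorem integrable_comp_add_of_abs_le [IsFiniteMeasure μ] (hmeas : Measurable h) {C : ℝ}
    (hC : ∀ x, |h x| ≤ C) (x : ℝ) : Integrable (fun z ↦ h (x + z)) μ :=
  .of_bound (hmeas.comp (measurable_const_add x)).aestronglyMeasurable C
    (.of_forall fun z ↦ hC (x + z))

theorem ae_continuousAt_comp_add_of_monotone [NullSingletonClass μ] (hmono : Monotone h) (x : ℝ) :
    ∀ᵐ z ∂μ, ContinuousAt (fun y ↦ h (y + z)) x := by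
  have hcount : {z | ¬ ContinuousAt h (x + z)}.Countable :=
    hmono.countable_not_continuousAt.preimage (add_right_injective x)
  filter_upwards [hcount.ae_notMem μ] with z hz
  exact (not_not.1 hz).comp (f := (· + z)) (by fun_prop)

theorem continuous_integral_comp_add_of_monotone [NullSingletonClass μ] (hmono : Monotone h)
    (hint : ∀ x, Integrable (fun z ↦ h (x + z)) μ) : Continuous fun x ↦ ∫ z, h (x + z) ∂μ := by
  refine continuous_iff_continuousAt.2 fun x ↦ ?_
  refine continuousAt_of_dominated (bound := fun z ↦ |h (x - 1 + z)| + |h (x + 1 + z)|)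
    (.of_forall fun y ↦ (hint y).aestronglyMeasurable) ?_
    ((hint (x - 1)).abs.add (hint (x + 1)).abs) (ae_continuousAt_comp_add_of_monotone hmono x)
  filter_upwards [Ioo_mem_nhds (sub_one_lt x) (lt_add_one x)] with y hy
  refine .of_forall fun z ↦ ?_
  calc |h (y + z)| ≤ max |h (x - 1 + z)| |h (x + 1 + z)| :=
        abs_le_max_abs_abs (hmono (by linarith [hy.1])) (hmono (by linarith [hy.2]))
    _ ≤ |h (x - 1 + z)| + |h (x + 1 + z)| :=
        max_le_add_of_nonneg (abs_nonneg _) (abs_nonneg _)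

-- Every point lies in an interval `(x + z, y + z)` on which `h` is constant, since the good `z` are
-- dense; so `h` is locally constant on the connected line.
theorem apply_eq_of_ae_comp_add_eq [μ.IsOpenPosMeasure] (hmono : Monotone h) {x y : ℝ}
    (hxy : x < y) (heq : ∀ᵐ z ∂μ, h (x + z) = h (y + z)) (a b : ℝ) : h a = h b := by
  suffices IsLocallyConstant h from this.apply_eq_of_preconnectedSpace a b
  refine (IsLocallyConstant.iff_eventually_eq h).2 fun p ↦ ?_
  obtain ⟨z, hz, hzp⟩ := (Measure.dense_of_ae heq).exists_between (sub_lt_sub_left hxy p)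
  have hp : p ∈ Ioo (x + z) (y + z) := ⟨by linarith [hzp.2], by linarith [hzp.1]⟩
  have hconst : ∀ q ∈ Ioo (x + z) (y + z), h q = h (x + z) := fun q hq ↦
    ((hmono hq.2.le).trans_eq hz.symm).antisymm (hmono hq.1.le)
  filter_upwards [Ioo_mem_nhds hp.1 hp.2] with q hq
  rw [hconst q hq, hconst p hp]

theorem strictMono_integral_comp_add [μ.IsOpenPosMeasure] (hmono : Monotone h)
    (hint : ∀ x, Integrable (fun z ↦ h (x + z)) μ) (hconst : ¬ ∃ c, ∀ x, h x = c) :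
    StrictMono fun x ↦ ∫ z, h (x + z) ∂μ := by
  intro x y hxy
  have hle (z : ℝ) : h (x + z) ≤ h (y + z) := hmono (by linarith)
  refine (integral_mono (hint x) (hint y) hle).lt_of_ne fun heq ↦ hconst ⟨h 0, fun a ↦ ?_⟩
  have hae := (integral_eq_iff_of_ae_le (hint x) (hint y) (.of_forall hle)).1 heq
  exact apply_eq_of_ae_comp_add_eq hmono hxy hae a 0

end Smoothing

theorem gq_eq_gaussianPDFReal {σ : ℝ} (hσ : 0 < σ) (z : ℝ) :
    gq σ z = ProbabilityTheory.gaussianPDFReal 0 (σ.toNNReal ^ 2) z := by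
  have hsqrt : √(2 * Real.pi * σ ^ 2) = σ * √(2 * Real.pi) := by
    rw [Real.sqrt_mul (by positivity), Real.sqrt_sq hσ.le, mul_comm]
  simp only [gq, ProbabilityTheory.gaussianPDFReal, NNReal.coe_pow, Real.coe_toNNReal σ hσ.le,
    hsqrt, sub_zero]
  exact div_eq_inv_mul _ _

theorem integral_mul_gq {σ : ℝ} (hσ : 0 < σ) (f : ℝ → ℝ) :
    ∫ z, f z * gq σ z = ∫ z, f z ∂ProbabilityTheory.gaussianReal 0 (σ.toNNReal ^ 2) := by
  have hvar : σ.toNNReal ^ 2 ≠ 0 := by positivity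
  simp only [ProbabilityTheory.integral_gaussianReal_eq_integral_smul hvar,
    gq_eq_gaussianPDFReal hσ, smul_eq_mul, mul_comm]

theorem stmt5_general {μ : Measure ℝ} [NullSingletonClass μ] [μ.IsOpenPosMeasure]
    {N : ℝ} (hN : 0 < N) {h : ℝ → ℝ} (hmono : Monotone h)
    (hint : ∀ x, Integrable (fun z ↦ h (x + z)) μ) {g F IS : ℝ → ℝ}
    (hg : ∀ x, g x = ∫ z, h (x + z) ∂μ) (hF0 : F 0 = g 0)
    (hF : ∀ x : ℝ, x ≠ 0 → F x = g x / N + ((N - 1) / (N * x)) * ∫ u in (0:ℝ)..x, g u)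
    (hIS : ∀ x : ℝ, x ≠ 0 → IS x = (1 / x) * ∫ y in (0:ℝ)..x, g y) :
    (∀ x : ℝ, x ≠ 0 → IS x = N * ∫ y in (0:ℝ)..1, F (x * y) * y ^ (N - 1)) ∧
    ((¬ ∃ c : ℝ, ∀ x, h x = c) →
      (∀ x : ℝ, 0 < x → IS x < F x) ∧ (∀ x : ℝ, x < 0 → F x < IS x)) := by
  have hg_eq : g = fun x ↦ ∫ z, h (x + z) ∂μ := funext hg
  have hcont : Continuous g := hg_eq ▸ continuous_integral_comp_add_of_monotone hmono hint
  have hIS_mean (x : ℝ) (hx : x ≠ 0) : IS x = runningMean g x := by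
    rw [hIS x hx, ← smul_runningMean, smul_eq_mul, one_div, inv_mul_cancel_left₀ hx]
  have hF_mean (x : ℝ) : N * F x = (N - 1) * runningMean g x + g x := by
    obtain rfl | hx := eq_or_ne x 0
    · rw [hF0, runningMean_zero]
      ring
    · rw [hF x hx, ← smul_runningMean, smul_eq_mul]
      field_simp
      ring
  refine ⟨fun x hx ↦ ?_, fun hconst ↦ ?_⟩
  · rw [hIS_mean x hx, ← integral_rpow_smul_runningMean_mul hN hcont x,
      ← intervalIntegral.integral_const_mul]
    refine intervalIntegral.integral_congr fun y _ ↦ ?_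
    simp only [smul_eq_mul, ← hF_mean]
    ring
  · have hstrict : StrictMono g := hg_eq ▸ strictMono_integral_comp_add hmono hint hconst
    refine ⟨fun x hx ↦ ?_, fun x hx ↦ ?_⟩
    · rw [hIS_mean x hx.ne', ← mul_lt_mul_iff_right₀ hN, hF_mean]
      linarith [runningMean_lt_of_pos hcont hstrict hx]
    · rw [hIS_mean x hx.ne, ← mul_lt_mul_iff_right₀ hN, hF_mean]
      linarith [lt_runningMean_of_neg hcont hstrict hx]

/-- With `IS(x) = (1/x)∫₀ˣ g(y) dy` for `x ≠ 0`, one has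
`IS(x) = N·∫₀¹ F(xy)·y^{N−1} dy` for every `x ≠ 0`; and if `h` is not constant then
`IS(x) < F(x)` for `x > 0` and `IS(x) > F(x)` for `x < 0`. -/
theorem stmt5 (σ : ℝ) (hσ : 0 < σ) (N : ℕ) (hN : 1 ≤ N)
    (h : ℝ → ℝ) (hmeas : Measurable h) (hmono : Monotone h) (hbdd : ∃ C, ∀ x, |h x| ≤ C)
    (g F IS : ℝ → ℝ)
    (hg : ∀ x, g x = ∫ z, h (x + z) * gq σ z)
    (hF0 : F 0 = g 0)
    (hF : ∀ x : ℝ, x ≠ 0 → F x = g x / N + (((N:ℝ) - 1) / (N * x)) * ∫ u in (0:ℝ)..x, g u)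
    (hIS : ∀ x : ℝ, x ≠ 0 → IS x = (1 / x) * ∫ y in (0:ℝ)..x, g y) :
    (∀ x : ℝ, x ≠ 0 → IS x = N * ∫ y in (0:ℝ)..1, F (x * y) * y ^ (N - 1)) ∧
    ((¬ ∃ c : ℝ, ∀ x, h x = c) →
      (∀ x : ℝ, 0 < x → IS x < F x) ∧ (∀ x : ℝ, x < 0 → F x < IS x)) := by
  obtain ⟨C, hC⟩ := hbdd
  have hvar : σ.toNNReal ^ 2 ≠ 0 := by positivity
  have := ProbabilityTheory.nullSingletonClass_gaussianReal (μ := 0) hvar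
  have := (ProbabilityTheory.gaussianReal_absolutelyContinuous' 0 hvar).isOpenPosMeasure
  simpa only [← Nat.cast_pred hN, Real.rpow_natCast] using
    stmt5_general (Nat.cast_pos.2 hN) hmono (integrable_comp_add_of_abs_le hmeas hC)
      (fun x ↦ (hg x).trans (integral_mul_gq hσ _)) hF0 hF hIS
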